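/- Let (X,T) be a topological dynamical system and ρ a T-invariant Borel probability measure on X. If ρ has discrete spectrum, then the measure complexity of (X,T,ρ) is sub-polynomial. -/

import Mathlib

/-!
Along an orbit an eigenfunction `g` takes the values `c ^ k * g x` with `|c| = 1`, so two points
with close values of `g` keep close values forever: up to a small set, finitely many classes of
points suffice, whatever the length `n` of the orbits. Such a bound, uniform in `n`, is inherited
by sums, by scalar multiples and, through Markov's inequality for Birkhoff sums, by `L¹`-limits.
If the eigenfunctions span `L²`, it therefore holds for every `L²` function. A finite-valued map
into a metric space is controlled by the scalar function that numbers its values, and the identity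
map of `X` is an `L¹`-limit of finite-valued maps; for the identity map the bound says that
`S_n(d,ρ,ε)` is bounded in `n`.
-/

open MeasureTheory Filter

/-- The Bowen-type averaged metric `d̄_n(x,y) = (1/n) ∑_{i=0}^{n-1} d(Tⁱx, Tⁱy)`. -/
noncomputable def dbar {X : Type*} [PseudoMetricSpace X] (T : X → X) (n : ℕ) (x y : X) : ℝ :=
  (∑ i ∈ Finset.range n, dist (T^[i] x) (T^[i] y)) / n

/-- The measure complexity function `S_n(d,ρ,ε)`. -/
noncomputable def measureComplexity {X : Type*} [PseudoMetricSpace X] [MeasurableSpace X]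
    (T : X → X) (ρ : Measure X) (n : ℕ) (ε : ℝ) : ℕ :=
  sInf {m : ℕ | ∃ xs : Fin m → X,
    1 - ε < (ρ (⋃ i, {y | dbar T n (xs i) y < ε})).toReal}

/-- The measure complexity of `(X,T,ρ)` is sub-polynomial. -/
def SubPolynomialComplexity {X : Type*} [PseudoMetricSpace X] [MeasurableSpace X]
    (T : X → X) (ρ : Measure X) : Prop :=
  ∀ τ > (0 : ℝ), ∀ ε > (0 : ℝ),
    Filter.atTop.liminf (fun n : ℕ => (measureComplexity T ρ n ε : ℝ) / (n : ℝ) ^ τ) = 0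

/-- A `T`-invariant measure `ρ` has discrete spectrum: `L²(X,ρ)` is spanned by the
eigenfunctions of the Koopman operator `g ↦ g ∘ T`. -/
def HasDiscreteSpectrum {X : Type*} [MeasurableSpace X] (T : X → X) (ρ : Measure X) : Prop :=
  (Submodule.span ℂ {g : Lp ℂ 2 ρ | g ≠ 0 ∧ ∃ c : ℂ,
      (fun x => (g : X → ℂ) (T x)) =ᵐ[ρ] fun x => c * (g : X → ℂ) x}).topologicalClosure = ⊤

open scoped ENNReal NNReal

section BirkhoffSum

variable {X : Type*} [MeasurableSpace X] {T : X → X} {ρ : Measure X} {φ : X → ℝ≥0∞}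

theorem lintegral_birkhoffSum (hT : MeasurePreserving T ρ ρ) (hφ : AEMeasurable φ ρ) (n : ℕ) :
    ∫⁻ x, birkhoffSum T φ n x ∂ρ = n * ∫⁻ x, φ x ∂ρ := by
  have hφT (k : ℕ) : AEMeasurable (fun x => φ (T^[k] x)) ρ :=
    hφ.comp_quasiMeasurePreserving (hT.iterate k).quasiMeasurePreserving
  have hint (k : ℕ) : ∫⁻ x, φ (T^[k] x) ∂ρ = ∫⁻ x, φ x ∂ρ := by
    have hmap := (hT.iterate k).map_eq
    rw [← lintegral_map' (by rwa [hmap]) (hT.iterate k).aemeasurable, hmap]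
  simp only [birkhoffSum, lintegral_finsetSum' _ fun k _ => hφT k, hint, Finset.sum_const,
    Finset.card_range, nsmul_eq_mul]

theorem aemeasurable_birkhoffSum (hT : Measure.QuasiMeasurePreserving T ρ ρ)
    (hφ : AEMeasurable φ ρ) (n : ℕ) : AEMeasurable (birkhoffSum T φ n) ρ :=
  Finset.aemeasurable_fun_sum _ fun k _ => hφ.comp_quasiMeasurePreserving (hT.iterate k)

theorem mul_measure_lt_birkhoffSum_le_lintegral (hT : MeasurePreserving T ρ ρ)
    (hφ : AEMeasurable φ ρ) (n : ℕ) (a : ℝ≥0∞) :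
    a * ρ {x | n * a < birkhoffSum T φ n x} ≤ ∫⁻ x, φ x ∂ρ := by
  rcases n.eq_zero_or_pos with rfl | hn
  · simp
  have hn0 : (n : ℝ≥0∞) ≠ 0 := by exact_mod_cast hn.ne'
  refine (ENNReal.mul_le_mul_iff_right hn0 (ENNReal.natCast_ne_top n)).1 ?_
  calc n * (a * ρ {x | n * a < birkhoffSum T φ n x})
      ≤ n * a * ρ {x | n * a ≤ birkhoffSum T φ n x} := by
        rw [← mul_assoc]
        gcongr
        exact fun hx => le_of_lt hx
    _ ≤ ∫⁻ x, birkhoffSum T φ n x ∂ρ :=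
        mul_meas_ge_le_lintegral₀ (aemeasurable_birkhoffSum hT.quasiMeasurePreserving hφ n) _
    _ = n * ∫⁻ x, φ x ∂ρ := lintegral_birkhoffSum hT hφ n

end BirkhoffSum

theorem ae_forall_iterate_eq {X α : Type*} [MeasurableSpace X] {T : X → X} {ρ : Measure X}
    {f : X → α} {R : α → α} (hT : Measure.QuasiMeasurePreserving T ρ ρ)
    (hfT : ∀ᵐ x ∂ρ, f (T x) = R (f x)) : ∀ᵐ x ∂ρ, ∀ k, f (T^[k] x) = R^[k] (f x) := by
  filter_upwards [ae_all_iff.2 fun k => (hT.iterate k).ae hfT] with x hx k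
  induction k with
  | zero => rfl
  | succ k ih => rw [Function.iterate_succ_apply', hx, ih, Function.iterate_succ_apply']

theorem exists_simpleFunc_measure_le_edist_le {X E : Type*} [MeasurableSpace X]
    [PseudoEMetricSpace E] {ρ : Measure X} [IsFiniteMeasure ρ] {f : X → E}
    (hf : AEStronglyMeasurable f ρ) {a b : ℝ≥0∞} (ha : 0 < a) (hb : 0 < b) :
    ∃ s : SimpleFunc X E, ρ {x | a ≤ edist (s x) (f x)} ≤ b := by
  set s := hf.stronglyMeasurable_mk.approx
  have hlim : TendstoInMeasure ρ (fun i => s i) atTop f := by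
    refine tendstoInMeasure_of_tendsto_ae (fun i => (s i).aestronglyMeasurable) ?_
    filter_upwards [hf.ae_eq_mk] with x hx using hx ▸ hf.stronglyMeasurable_mk.tendsto_approx x
  obtain ⟨i, hi⟩ := ((hlim a ha).eventually_le_const hb).exists
  exact ⟨s i, hi⟩

section OrbitEDist

variable {X E F : Type*} [PseudoEMetricSpace E] [PseudoEMetricSpace F]

/-- The total distance between two orbit segments of length `n` observed through `f`; for `f = id`
it is `n * d̄_n(x,y)`. It is not divided by `n`, so that `n = 0` needs no separate treatment. -/
noncomputable def orbitEDist (T : X → X) (f : X → E) (n : ℕ) (x y : X) : ℝ≥0∞ :=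
  ∑ k ∈ Finset.range n, edist (f (T^[k] x)) (f (T^[k] y))

variable {T : X → X} {f : X → E} {n : ℕ} {x y : X}

theorem orbitEDist_le_of_forall_edist_le {a : ℝ≥0∞}
    (h : ∀ k, edist (f (T^[k] x)) (f (T^[k] y)) ≤ a) : orbitEDist T f n x y ≤ n * a := by
  simpa [orbitEDist] using Finset.sum_le_card_nsmul (Finset.range n) _ a fun k _ => h k

theorem orbitEDist_le_mul {g : X → F} {C : ℝ≥0∞}
    (h : ∀ x y, edist (f x) (f y) ≤ C * edist (g x) (g y)) :
    orbitEDist T f n x y ≤ C * orbitEDist T g n x y := by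
  rw [orbitEDist, orbitEDist, Finset.mul_sum]
  exact Finset.sum_le_sum fun k _ => h _ _

theorem orbitEDist_add_le {E : Type*} [SeminormedAddCommGroup E] {f g : X → E} :
    orbitEDist T (f + g) n x y ≤ orbitEDist T f n x y + orbitEDist T g n x y := by
  simp only [orbitEDist, ← Finset.sum_add_distrib]
  exact Finset.sum_le_sum fun k _ => edist_add_add_le _ _ _ _

theorem orbitEDist_le_birkhoffSum_add (g : X → E) :
    orbitEDist T f n x y ≤ birkhoffSum T (fun z => edist (f z) (g z)) n x
      + orbitEDist T g n x y + birkhoffSum T (fun z => edist (f z) (g z)) n y := by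
  simp only [orbitEDist, birkhoffSum, ← Finset.sum_add_distrib]
  refine Finset.sum_le_sum fun k _ => ?_
  rw [edist_comm (f (T^[k] y))]
  exact edist_triangle4 _ _ _ _

theorem dbar_le_of_orbitEDist_id_le {X : Type*} [PseudoMetricSpace X] {T : X → X} {n : ℕ}
    {x y : X} {a : ℝ≥0} (h : orbitEDist T id n x y ≤ n * a) : dbar T n x y ≤ a := by
  have hsum : ∑ k ∈ Finset.range n, dist (T^[k] x) (T^[k] y) = (orbitEDist T id n x y).toReal := by
    simp only [orbitEDist, ENNReal.toReal_sum fun _ _ => edist_ne_top _ _, dist_edist, id]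
  refine div_le_of_le_mul₀ n.cast_nonneg a.coe_nonneg ?_
  rw [hsum, mul_comm]
  exact ENNReal.toReal_mono (by finiteness) h

end OrbitEDist

/-- Bounded complexity, in the mean along orbits, of the system `(X,T,ρ)` observed through `f`: for
every `ε` there is a number `m`, independent of `n`, such that off a set of measure at most `ε` the
space is partitioned into `m` classes whose members have orbits of length `n` at mean distance at
most `ε`. The partition is encoded as a colouring by `Fin m`. -/
def HasBoundedMeanComplexity {X E : Type*} [MeasurableSpace X] [PseudoEMetricSpace E]
    (T : X → X) (ρ : Measure X) (f : X → E) : Prop :=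
  ∀ ε : ℝ≥0, 0 < ε → ∃ m : ℕ, ∀ n : ℕ, ∃ (c : X → Fin m) (B : Set X), ρ B ≤ ε ∧
    ∀ x ∉ B, ∀ y ∉ B, c x = c y → orbitEDist T f n x y ≤ n * ε

namespace HasBoundedMeanComplexity

variable {X E F : Type*} [MeasurableSpace X] {T : X → X} {ρ : Measure X}

section PseudoEMetricSpace

variable [PseudoEMetricSpace E] [PseudoEMetricSpace F] {f : X → E}

theorem const (a : E) : HasBoundedMeanComplexity T ρ fun _ : X => a := fun ε _ =>
  ⟨1, fun n => ⟨fun _ => 0, ∅, by simp, fun x _ y _ _ => by simp [orbitEDist]⟩⟩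

theorem of_edist_le {g : X → F} (hg : HasBoundedMeanComplexity T ρ g) {C : ℝ≥0}
    (hfg : ∀ x y, edist (f x) (f y) ≤ C * edist (g x) (g y)) :
    HasBoundedMeanComplexity T ρ f := by
  intro ε hε
  obtain ⟨m, hm⟩ := hg (ε / (C + 1)) (by positivity)
  refine ⟨m, fun n => ?_⟩
  obtain ⟨c, B, hB, hc⟩ := hm n
  have hdiv : ε / (C + 1) ≤ ε := div_le_self ε.2 (le_add_of_nonneg_left C.2)
  have hmul : C * (ε / (C + 1)) ≤ ε := by
    rw [mul_div_left_comm]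
    exact mul_le_of_le_one_right ε.2
      (div_le_one_of_le₀ (le_add_of_nonneg_right zero_le_one) (by positivity))
  refine ⟨c, B, hB.trans (by exact_mod_cast hdiv), fun x hx y hy hxy => ?_⟩
  calc orbitEDist T f n x y ≤ C * orbitEDist T g n x y := orbitEDist_le_mul hfg
    _ ≤ C * (n * (ε / (C + 1) : ℝ≥0)) := by gcongr; exact hc x hx y hy hxy
    _ = n * (C * (ε / (C + 1)) : ℝ≥0) := by push_cast; ring
    _ ≤ n * ε := by gcongr

theorem of_tendsto_lintegral_edist (hT : MeasurePreserving T ρ ρ) {ι : Type*} {l : Filter ι}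
    [l.NeBot] {g : ι → X → E} (hg : ∀ i, HasBoundedMeanComplexity T ρ (g i))
    (hmeas : ∀ i, AEMeasurable (fun x => edist (f x) (g i x)) ρ)
    (hlim : Tendsto (fun i => ∫⁻ x, edist (f x) (g i x) ∂ρ) l (nhds 0)) :
    HasBoundedMeanComplexity T ρ f := by
  intro ε hε
  obtain ⟨δ, hδ, hδε⟩ : ∃ δ : ℝ≥0, 0 < δ ∧ δ + δ + δ = ε := ⟨ε / 3, by positivity, by ring⟩
  obtain ⟨i, hi⟩ : ∃ i, ∫⁻ x, edist (f x) (g i x) ∂ρ ≤ δ * δ :=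
    (hlim.eventually_le_const (by positivity)).exists
  obtain ⟨m, hm⟩ := hg i δ hδ
  refine ⟨m, fun n => ?_⟩
  obtain ⟨c, B, hB, hc⟩ := hm n
  set S := birkhoffSum T (fun x => edist (f x) (g i x)) n
  have hS : ρ {x | n * δ < S x} ≤ δ :=
    (ENNReal.mul_le_mul_iff_right (by positivity) ENNReal.coe_ne_top).1
      ((mul_measure_lt_birkhoffSum_le_lintegral hT (hmeas i) n δ).trans hi)
  refine ⟨c, B ∪ {x | n * δ < S x}, ?_, fun x hx y hy hxy => ?_⟩
  · calc ρ (B ∪ {x | n * δ < S x}) ≤ δ + δ := (measure_union_le _ _).trans (add_le_add hB hS)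
      _ ≤ ε := by exact_mod_cast hδε ▸ le_self_add
  · simp only [Set.mem_union, Set.mem_ofPred_eq, not_or, not_lt] at hx hy
    calc orbitEDist T f n x y ≤ S x + orbitEDist T (g i) n x y + S y :=
          orbitEDist_le_birkhoffSum_add (g i)
      _ ≤ n * δ + n * δ + n * δ :=
          add_le_add (add_le_add hx.2 (hc x hx.1 y hy.1 hxy)) hy.2
      _ = n * ε := by rw [← hδε]; push_cast; ring

theorem congr_ae (hT : MeasurePreserving T ρ ρ) {g : X → E} (hg : HasBoundedMeanComplexity T ρ g)
    (hfg : f =ᵐ[ρ] g) : HasBoundedMeanComplexity T ρ f := by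
  have hzero : (fun x => edist (f x) (g x)) =ᵐ[ρ] fun _ => 0 := by
    filter_upwards [hfg] with x hx using by rw [hx, edist_self]
  refine of_tendsto_lintegral_edist hT (l := (pure () : Filter Unit)) (fun _ => hg)
    (fun _ => aemeasurable_const.congr hzero.symm) ?_
  simp [lintegral_congr_ae hzero]

theorem of_ae_semiconj_lipschitzWith_one [IsFiniteMeasure ρ]
    (hT : Measure.QuasiMeasurePreserving T ρ ρ) (hf : AEStronglyMeasurable f ρ) {R : E → E}
    (hR : LipschitzWith 1 R) (hfT : ∀ᵐ x ∂ρ, f (T x) = R (f x)) :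
    HasBoundedMeanComplexity T ρ f := by
  have horbit := ae_forall_iterate_eq hT hfT
  intro ε hε
  obtain ⟨s, hs⟩ := exists_simpleFunc_measure_le_edist_le hf (a := (ε / 2 : ℝ≥0))
    (b := ε) (by positivity) (by positivity)
  refine ⟨Nat.card s.range, fun n => ⟨fun x => Finite.equivFin _ ⟨s x, s.mem_range_self x⟩,
    {x | (ε / 2 : ℝ≥0) ≤ edist (s x) (f x)} ∪ {x | ¬∀ k, f (T^[k] x) = R^[k] (f x)}, ?_, ?_⟩⟩
  · exact (measure_union_le _ _).trans (by rw [ae_iff.1 horbit, add_zero]; exact hs)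
  intro x hx y hy hxy
  simp only [Set.mem_union, Set.mem_ofPred_eq, not_or, not_le, not_not] at hx hy
  have hsxy : s x = s y := congrArg Subtype.val ((Finite.equivFin _).injective hxy)
  have hfxy : edist (f x) (f y) ≤ ε :=
    calc edist (f x) (f y) ≤ edist (s x) (f x) + edist (s y) (f y) := by
          rw [← hsxy]; exact edist_triangle_left _ _ _
      _ ≤ (ε / 2 : ℝ≥0) + (ε / 2 : ℝ≥0) := add_le_add hx.1.le hy.1.le
      _ = ε := by rw [← ENNReal.coe_add, add_halves]
  refine orbitEDist_le_of_forall_edist_le fun k => ?_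
  rw [hx.2, hy.2]
  simpa using ((hR.iterate k).edist_le_mul (f x) (f y)).trans (by simpa using hfxy)

end PseudoEMetricSpace

theorem add [SeminormedAddCommGroup E] {f g : X → E} (hf : HasBoundedMeanComplexity T ρ f)
    (hg : HasBoundedMeanComplexity T ρ g) : HasBoundedMeanComplexity T ρ (f + g) := by
  intro ε hε
  obtain ⟨m, hm⟩ := hf (ε / 2) (by positivity)
  obtain ⟨l, hl⟩ := hg (ε / 2) (by positivity)
  refine ⟨m * l, fun n => ?_⟩
  obtain ⟨c, B, hB, hc⟩ := hm n
  obtain ⟨c', B', hB', hc'⟩ := hl n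
  have hhalves : ((ε / 2 : ℝ≥0) + (ε / 2 : ℝ≥0) : ℝ≥0∞) = ε := by
    rw [← ENNReal.coe_add, add_halves]
  refine ⟨fun x => finProdFinEquiv (c x, c' x), B ∪ B', ?_, fun x hx y hy hxy => ?_⟩
  · exact (measure_union_le _ _).trans ((add_le_add hB hB').trans_eq hhalves)
  · simp only [Set.mem_union, not_or] at hx hy
    obtain ⟨hcxy, hcxy'⟩ := Prod.mk.inj (finProdFinEquiv.injective hxy)
    calc orbitEDist T (f + g) n x y ≤ orbitEDist T f n x y + orbitEDist T g n x y :=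
          orbitEDist_add_le
      _ ≤ n * (ε / 2 : ℝ≥0) + n * (ε / 2 : ℝ≥0) :=
          add_le_add (hc x hx.1 y hy.1 hcxy) (hc' x hx.2 y hy.2 hcxy')
      _ = n * ε := by rw [← mul_add, hhalves]

theorem const_smul {𝕜 : Type*} [SeminormedAddCommGroup 𝕜] [SeminormedAddCommGroup E]
    [SMulZeroClass 𝕜 E] [IsBoundedSMul 𝕜 E] {f : X → E} (hf : HasBoundedMeanComplexity T ρ f)
    (a : 𝕜) : HasBoundedMeanComplexity T ρ (a • f) :=
  hf.of_edist_le fun x y => edist_smul_le a (f x) (f y)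

theorem exists_measureComplexity_le {X : Type*} [PseudoMetricSpace X] [MeasurableSpace X]
    {T : X → X} {ρ : Measure X} [IsProbabilityMeasure ρ]
    (h : HasBoundedMeanComplexity T ρ (id : X → X)) {ε : ℝ} (hε : 0 < ε) :
    ∃ m : ℕ, ∀ n, measureComplexity T ρ n ε ≤ m := by
  obtain ⟨m, hm⟩ := h (ε / 2).toNNReal (by simpa using hε)
  have : Nonempty X := ρ.nonempty_of_neZero
  refine ⟨m, fun n => Nat.sInf_le ?_⟩
  obtain ⟨c, B, hB, hc⟩ := hm n
  set center : Fin m → X := Function.invFunOn c Bᶜ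
  refine ⟨center, ?_⟩
  set U := ⋃ i, {y | dbar T n (center i) y < ε}
  have hcover : Set.univ ⊆ U ∪ B := by
    intro y _
    by_cases hy : y ∈ B
    · exact Or.inr hy
    have hexists : ∃ x ∈ Bᶜ, c x = c y := ⟨y, hy, rfl⟩
    have hcB : center (c y) ∉ B := Function.invFunOn_mem hexists
    have hcy : c (center (c y)) = c y := Function.invFunOn_eq hexists
    refine Or.inl (Set.mem_iUnion.2 ⟨c y, ?_⟩)
    calc dbar T n (center (c y)) y ≤ (ε / 2).toNNReal :=
          dbar_le_of_orbitEDist_id_le (hc _ hcB y hy hcy)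
      _ = ε / 2 := Real.coe_toNNReal _ (by positivity)
      _ < ε := half_lt_self hε
  have hBreal : ρ.real B ≤ ε / 2 := ENNReal.toReal_le_of_le_ofReal (by positivity) hB
  have hone : 1 ≤ ρ.real U + ρ.real B :=
    calc (1 : ℝ) = ρ.real Set.univ := probReal_univ.symm
      _ ≤ ρ.real (U ∪ B) := measureReal_mono hcover
      _ ≤ ρ.real U + ρ.real B := measureReal_union_le _ _
  change 1 - ε < ρ.real U
  linarith

end HasBoundedMeanComplexity

section Lp

variable {X 𝕜 E : Type*} [MeasurableSpace X] {T : X → X} {ρ : Measure X} [NormedAddCommGroup E]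
  [NormedField 𝕜] [NormedSpace 𝕜 E] {p : ℝ≥0∞}

variable (𝕜 E p) in
/-- The `L^p` functions of bounded mean complexity, as a subspace of `L^p`; invariance of the
measure makes the notion independent of the representative. -/
def boundedMeanComplexitySubmodule (hT : MeasurePreserving T ρ ρ) :
    Submodule 𝕜 (Lp E p ρ) where
  carrier := {g | HasBoundedMeanComplexity T ρ g}
  zero_mem' := (HasBoundedMeanComplexity.const 0).congr_ae hT (Lp.coeFn_zero E p ρ)
  add_mem' hf hg := (hf.add hg).congr_ae hT (Lp.coeFn_add _ _)
  smul_mem' c g hg := (hg.const_smul c).congr_ae hT (Lp.coeFn_smul c g)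

variable [Fact (1 ≤ p)]

theorem norm_eq_one_of_comp_ae_eq_smul (hT : MeasurePreserving T ρ ρ) {g : Lp E p ρ} (hg : g ≠ 0)
    {c : 𝕜} (hgT : (fun x => g (T x)) =ᵐ[ρ] fun x => c • g x) : ‖c‖ = 1 := by
  have heq : Lp.compMeasurePreserving T hT g = c • g := Lp.ext <|
    (Lp.coeFn_compMeasurePreserving g hT).trans (hgT.trans (Lp.coeFn_smul c g).symm)
  have hnorm : ‖c‖ * ‖g‖ = ‖g‖ := by
    rw [← norm_smul, ← heq, Lp.norm_compMeasurePreserving]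
  exact (mul_eq_right₀ (norm_ne_zero_iff.2 hg)).1 hnorm

theorem tendsto_lintegral_edist_of_tendsto_Lp [IsFiniteMeasure ρ] {ι : Type*} {l : Filter ι}
    {u : ι → Lp E p ρ} {g : Lp E p ρ} (h : Tendsto u l (nhds g)) :
    Tendsto (fun i => ∫⁻ x, edist (g x) (u i x) ∂ρ) l (nhds 0) := by
  have hmass : ρ Set.univ ^ (1 / (1 : ℝ≥0∞).toReal - 1 / p.toReal) ≠ ∞ := by
    have hp : 1 / p.toReal ≤ 1 := by
      rcases ENNReal.dichotomy p with rfl | hp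
      · simp
      · simpa using inv_le_one_of_one_le₀ hp
    exact ENNReal.rpow_ne_top_of_nonneg (by simpa using hp) (measure_ne_top ρ _)
  have hlim := ENNReal.Tendsto.mul_const ((Lp.tendsto_Lp_iff_tendsto_eLpNorm' u g).1 h)
    (Or.inr hmass)
  rw [zero_mul] at hlim
  refine tendsto_of_tendsto_of_tendsto_of_le_of_le tendsto_const_nhds hlim (fun _ => zero_le)
    fun i => ?_
  calc ∫⁻ x, edist (g x) (u i x) ∂ρ = eLpNorm (⇑(u i) - ⇑g) 1 ρ := by
        simp only [eLpNorm_one_eq_lintegral_enorm, Pi.sub_apply, ← edist_eq_enorm_sub, edist_comm]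
    _ ≤ _ := eLpNorm_le_eLpNorm_mul_rpow_measure_univ Fact.out
        ((Lp.aestronglyMeasurable _).sub (Lp.aestronglyMeasurable _))

theorem isClosed_boundedMeanComplexitySubmodule [IsFiniteMeasure ρ]
    (hT : MeasurePreserving T ρ ρ) :
    IsClosed (boundedMeanComplexitySubmodule 𝕜 E p hT : Set (Lp E p ρ)) := by
  refine IsSeqClosed.isClosed fun u g hu hlim => ?_
  exact HasBoundedMeanComplexity.of_tendsto_lintegral_edist hT hu
    (fun i => (Lp.aestronglyMeasurable g).edist (Lp.aestronglyMeasurable (u i)))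
    (tendsto_lintegral_edist_of_tendsto_Lp hlim)

end Lp

namespace HasDiscreteSpectrum

variable {X E : Type*} [MeasurableSpace X] {T : X → X} {ρ : Measure X} [IsFiniteMeasure ρ]

theorem hasBoundedMeanComplexity_of_memLp (h : HasDiscreteSpectrum T ρ)
    (hT : MeasurePreserving T ρ ρ) {f : X → ℂ} (hf : MemLp f 2 ρ) :
    HasBoundedMeanComplexity T ρ f := by
  have htop : ⊤ ≤ boundedMeanComplexitySubmodule ℂ ℂ 2 hT := by
    rw [← show _ = ⊤ from h]
    refine Submodule.topologicalClosure_minimal _ (Submodule.span_le.2 ?_)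
      (isClosed_boundedMeanComplexitySubmodule hT)
    rintro g ⟨hg, c, hgT⟩
    have hc : ‖c‖ = 1 := norm_eq_one_of_comp_ae_eq_smul hT hg hgT
    refine HasBoundedMeanComplexity.of_ae_semiconj_lipschitzWith_one hT.quasiMeasurePreserving
      (Lp.aestronglyMeasurable g) (R := (c * ·)) (fun z w => ?_) hgT
    have hc' : ‖c‖₊ = 1 := NNReal.eq hc
    simpa [hc'] using (edist_smul₀ c z w).le
  have hfLp : HasBoundedMeanComplexity T ρ (hf.toLp f) := htop Submodule.mem_top
  exact hfLp.congr_ae hT hf.coeFn_toLp.symm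

variable [PseudoMetricSpace E]

theorem hasBoundedMeanComplexity_simpleFunc (h : HasDiscreteSpectrum T ρ)
    (hT : MeasurePreserving T ρ ρ) (s : SimpleFunc X E) : HasBoundedMeanComplexity T ρ s := by
  obtain ⟨code, hcode⟩ := Set.countable_iff_exists_injOn.1 s.finite_range.countable
  have hψ : HasBoundedMeanComplexity T ρ (s.map fun a => (code a : ℂ)) :=
    h.hasBoundedMeanComplexity_of_memLp hT (SimpleFunc.memLp_of_isFiniteMeasure _ 2 ρ)
  refine hψ.of_edist_le (C := (Metric.ediam (Set.range s)).toNNReal) fun x y => ?_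
  rw [ENNReal.coe_toNNReal s.finite_range.isBounded.ediam_ne_top]
  rcases eq_or_ne (s x) (s y) with hxy | hxy
  · simp [hxy]
  have hne : code (s x) ≠ code (s y) := hcode.ne (Set.mem_range_self x) (Set.mem_range_self y) hxy
  have hone : 1 ≤ edist (code (s x) : ℂ) (code (s y)) := by
    rw [edist_dist, ENNReal.one_le_ofReal, ← Complex.ofReal_natCast, ← Complex.ofReal_natCast,
      Complex.isometry_ofReal.dist_eq, Nat.dist_cast_real]
    exact Nat.pairwise_one_le_dist hne
  exact (Metric.edist_le_ediam_of_mem (Set.mem_range_self x) (Set.mem_range_self y)).trans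
    (le_mul_of_one_le_right' hone)

theorem hasBoundedMeanComplexity_of_measurable [SecondCountableTopology E] [MeasurableSpace E]
    [OpensMeasurableSpace E] (h : HasDiscreteSpectrum T ρ) (hT : MeasurePreserving T ρ ρ)
    {f : X → E} (hf : Measurable f) (a : E) (hint : ∫⁻ x, edist a (f x) ∂ρ ≠ ∞) :
    HasBoundedMeanComplexity T ρ f := by
  set s := SimpleFunc.approxOn f hf Set.univ a (Set.mem_univ a)
  have hmeas (i : ℕ) : Measurable fun x => edist (f x) (s i x) := hf.edist (s i).measurable
  refine .of_tendsto_lintegral_edist hT (l := atTop)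
    (fun i => h.hasBoundedMeanComplexity_simpleFunc hT (s i)) (fun i => (hmeas i).aemeasurable) ?_
  rw [← lintegral_zero (μ := ρ)]
  refine tendsto_lintegral_of_dominated_convergence _ hmeas (fun i => .of_forall fun x => ?_) hint
    (.of_forall fun x => ?_)
  · beta_reduce
    rw [edist_comm]
    exact SimpleFunc.edist_approxOn_le hf (Set.mem_univ a) x i
  · have hs := SimpleFunc.tendsto_approxOn hf (Set.mem_univ a) (x := x) (by simp)
    simpa using (tendsto_const_nhds (x := f x)).edist hs

end HasDiscreteSpectrum

theorem subPolynomialComplexity_of_forall_exists_le {X : Type*} [PseudoMetricSpace X]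
    [MeasurableSpace X] {T : X → X} {ρ : Measure X}
    (h : ∀ ε > 0, ∃ m : ℕ, ∀ n, measureComplexity T ρ n ε ≤ m) : SubPolynomialComplexity T ρ := by
  intro τ hτ ε hε
  obtain ⟨m, hm⟩ := h ε hε
  have hlim : Tendsto (fun n : ℕ => (m : ℝ) / (n : ℝ) ^ τ) atTop (nhds 0) :=
    tendsto_const_nhds.div_atTop ((tendsto_rpow_atTop hτ).comp tendsto_natCast_atTop_atTop)
  refine (squeeze_zero (fun n => by positivity) (fun n => ?_) hlim).liminf_eq
  gcongr
  exact hm n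

theorem lintegral_edist_ne_top {X : Type*} [PseudoMetricSpace X] [BoundedSpace X]
    [MeasurableSpace X] (ρ : Measure X) [IsFiniteMeasure ρ] (a : X) :
    ∫⁻ x, edist a x ∂ρ ≠ ∞ := by
  have hdiam : Metric.ediam (Set.univ : Set X) ≠ ∞ :=
    Bornology.IsBounded.all (Set.univ : Set X) |>.ediam_ne_top
  refine ne_top_of_le_ne_top ?_ (lintegral_mono fun x =>
    Metric.edist_le_ediam_of_mem (Set.mem_univ a) (Set.mem_univ x))
  simpa using ENNReal.mul_ne_top hdiam (measure_ne_top ρ Set.univ)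

theorem subPolynomial_complexity_of_discrete_spectrum_general {X : Type*} [PseudoMetricSpace X]
    [SecondCountableTopology X] [MeasurableSpace X] [OpensMeasurableSpace X] {T : X → X}
    {ρ : Measure X} [IsProbabilityMeasure ρ] (hT : MeasurePreserving T ρ ρ)
    (hds : HasDiscreteSpectrum T ρ) (a : X) (hint : ∫⁻ x, edist a x ∂ρ ≠ ∞) :
    SubPolynomialComplexity T ρ :=
  subPolynomialComplexity_of_forall_exists_le fun _ hε =>
    (hds.hasBoundedMeanComplexity_of_measurable hT measurable_id a hint).exists_measureComplexity_le
      hε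

/-- If an invariant Borel probability measure has discrete spectrum, then its measure
complexity is sub-polynomial. -/
theorem subPolynomial_complexity_of_discrete_spectrum
    {X : Type*} [MetricSpace X] [CompactSpace X] [MeasurableSpace X] [BorelSpace X]
    (T : X ≃ₜ X)
    (ρ : Measure X) (hρprob : IsProbabilityMeasure ρ)
    (hρinv : MeasurePreserving (T : X → X) ρ ρ)
    (hds : HasDiscreteSpectrum (T : X → X) ρ) :
    SubPolynomialComplexity (T : X → X) ρ := by
  obtain ⟨a⟩ := ρ.nonempty_of_neZero
  exact subPolynomial_complexity_of_discrete_spectrum_general hρinv hds a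
    (lintegral_edist_ne_top ρ a)
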